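/- Let a, b ∈ ℝⁿ be vectors with nonempty supports A = supp(a) and B = supp(b), all of whose entries are bounded in absolute value by c > 0, and let (h(j))_{j=1}^{n} be independent random variables, each uniformly distributed on [0,1]. Let j_A be the (almost surely unique) minimizer of h over A and j_B the minimizer of h over B, and define Z = 1[h(j_A) = h(j_B)] · a[j_A] · b[j_B]. Then E[Z²] = (∑_{j∈A∩B} a[j]²·b[j]²) / |A∪B|, and consequently Var[Z] ≤ c⁴ · |A∩B| / |A∪B|. -/

import Mathlib

open MeasureTheory Finset
open scoped ENNReal


/-- The product measure on `J → ℝ` in which each coordinate is an independent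
uniform random variable on `[0,1]`: a uniform hash family on `J`. -/
noncomputable def uniformHash (J : Type*) [Fintype J] : Measure (J → ℝ) :=
  Measure.pi fun _ : J => (volume : Measure ℝ).restrict (Set.Icc 0 1)

/-- The support `{i : x i ≠ 0}` of a vector, as a `Finset`. -/
noncomputable def supp {n : ℕ} (x : Fin n → ℝ) : Finset (Fin n) :=
  Finset.univ.filter fun i => x i ≠ 0

/-- A minimizer of `f` over the nonempty finite set `s` (the minimizer of a uniform
hash family over a nonempty set is almost surely unique). -/
noncomputable def argminOn {α : Type*} (s : Finset α) (hs : s.Nonempty) (f : α → ℝ) : α :=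
  (s.exists_min_image f hs).choose

/-- The MinHash random variable `Z = 1[h(j_A) = h(j_B)] ⬝ a[j_A] ⬝ b[j_B]`, where
`j_A` and `j_B` are the minimizers of the hash `h` over `A` and `B` respectively. -/
noncomputable def Zuw {n : ℕ} (a b : Fin n → ℝ) (A B : Finset (Fin n))
    (hA : A.Nonempty) (hB : B.Nonempty) (h : Fin n → ℝ) : ℝ :=
  (if h (argminOn A hA h) = h (argminOn B hB h) then (1 : ℝ) else 0) *
    a (argminOn A hA h) * b (argminOn B hB h)

/-!
Almost surely `h` is injective, and then `h(j_A) = h(j_B)` means that `j_A = j_B` is the unique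
minimizer of `h` over `A ∪ B` and lies in `A ∩ B`. By exchangeability each element of `A ∪ B` is
that minimizer with probability `1 / |A ∪ B|`, hence
`E[Z] = (∑_{j ∈ A ∩ B} a_j b_j) / |A ∪ B|`. An indicator is its own square, so `Z²` is the same
random variable for the vectors `a²`, `b²`, and its expectation is an instance of this formula.
-/

section Minimizers

variable {ι α : Type*} [PartialOrder α]

lemma eq_of_isMinOn_of_injOn {h : ι → α} {s : Set ι} {i j : ι} (hinj : s.InjOn h)
    (hi : i ∈ s) (hj : j ∈ s) (hmin_i : IsMinOn h s i) (hmin_j : IsMinOn h s j) : i = j :=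
  hinj hi hj (le_antisymm (hmin_i hj) (hmin_j hi))

lemma isMinOn_union {h : ι → α} {s t : Set ι} {j : ι} :
    IsMinOn h (s ∪ t) j ↔ IsMinOn h s j ∧ IsMinOn h t j := by
  simp only [isMinOn_iff, Set.mem_union, or_imp, forall_and]

/-- The event that `j` attains the minimum of the hash over `U`; membership of `j` in `U` is not
part of the definition. -/
def minEvent (U : Finset ι) (j : ι) : Set (ι → α) :=
  {h | IsMinOn h U j}

lemma measurableSet_minEvent [TopologicalSpace α] [OrderClosedTopology α]
    [SecondCountableTopology α] [MeasurableSpace α] [OpensMeasurableSpace α]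
    (U : Finset ι) (j : ι) : MeasurableSet (minEvent U j : Set (ι → α)) := by
  simp only [minEvent, isMinOn_iff, Finset.mem_coe, Set.ofPred_forall]
  exact U.measurableSet_biInter fun i _ =>
    measurableSet_le (measurable_pi_apply j) (measurable_pi_apply i)

lemma preimage_comp_swap_minEvent [DecidableEq ι] {U : Finset ι} {j k : ι}
    (hj : j ∈ U) (hk : k ∈ U) :
    (fun h : ι → α => h ∘ Equiv.swap j k) ⁻¹' minEvent U k = minEvent U j := by
  have swap_mem_iff (i : ι) : Equiv.swap j k i ∈ U ↔ i ∈ U := by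
    rw [Equiv.swap_apply_def]
    split_ifs <;> simp_all only
  ext h
  simp only [minEvent, Set.mem_preimage, Set.mem_ofPred_eq, isMinOn_iff, Finset.mem_coe,
    Function.comp_apply, Equiv.swap_apply_right]
  rw [← (Equiv.swap j k).forall_congr_right (q := fun i => i ∈ U → h j ≤ h i)]
  simp only [swap_mem_iff]

lemma argminOn_mem (s : Finset ι) (hs : s.Nonempty) (h : ι → ℝ) : argminOn s hs h ∈ s :=
  (s.exists_min_image h hs).choose_spec.1

lemma isMinOn_argminOn (s : Finset ι) (hs : s.Nonempty) (h : ι → ℝ) :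
    IsMinOn h s (argminOn s hs h) :=
  isMinOn_iff.2 (s.exists_min_image h hs).choose_spec.2

lemma isMinOn_iff_eq_argminOn {s : Finset ι} (hs : s.Nonempty) {h : ι → ℝ}
    (hinj : Set.InjOn h s) {j : ι} (hj : j ∈ s) : IsMinOn h s j ↔ j = argminOn s hs h := by
  refine ⟨fun hmin => ?_, fun hj_eq => hj_eq ▸ isMinOn_argminOn s hs h⟩
  exact eq_of_isMinOn_of_injOn hinj hj (argminOn_mem s hs h) hmin (isMinOn_argminOn s hs h)

end Minimizers

section ProductMeasure

lemma ae_ne_of_indepFun {Ω α : Type*} [MeasurableSpace Ω] [MeasurableSpace α] [MeasurableEq α]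
    {P : Measure Ω} [IsFiniteMeasure P] {X Y : Ω → α} [NullSingletonClass (P.map Y)]
    (hX : AEMeasurable X P) (hY : AEMeasurable Y P) (hXY : ProbabilityTheory.IndepFun X Y P) :
    ∀ᵐ ω ∂P, X ω ≠ Y ω := by
  have diagonal_null : (P.map X).prod (P.map Y) (Set.diagonal α) = 0 :=
    Measure.measure_prod_null_of_ae_null measurableSet_diagonal <| .of_forall fun x => by
      have section_eq : Prod.mk x ⁻¹' Set.diagonal α = {x} := by
        ext y
        exact eq_comm
      simp only [section_eq, measure_singleton, Pi.zero_apply]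
  rw [← (ProbabilityTheory.indepFun_iff_map_prod_eq_prod_map_map hX hY).1 hXY] at diagonal_null
  exact ae_of_ae_map (hX.prodMk hY) (measure_eq_zero_iff_ae_notMem.1 diagonal_null)

variable {ι α : Type*} [Fintype ι] [MeasurableSpace α]

lemma ae_injective_pi [MeasurableEq α] (μ : ι → Measure α) [∀ i, IsProbabilityMeasure (μ i)]
    [∀ i, NullSingletonClass (μ i)] : ∀ᵐ h ∂Measure.pi μ, Function.Injective h := by
  have ae_ne (i j : ι) (hij : i ≠ j) : ∀ᵐ h ∂Measure.pi μ, h i ≠ h j := by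
    have hlaw : (Measure.pi μ).map (fun h => h j) = μ j := (measurePreserving_eval μ j).map_eq
    have : NullSingletonClass ((Measure.pi μ).map fun h => h j) := hlaw ▸ inferInstance
    exact ae_ne_of_indepFun (measurable_pi_apply i).aemeasurable
      (measurable_pi_apply j).aemeasurable
      ((ProbabilityTheory.iIndepFun_pi (X := fun _ => id) fun _ => aemeasurable_id).indepFun hij)
  have ae_all_ne : ∀ᵐ h ∂Measure.pi μ, ∀ i j, i ≠ j → h i ≠ h j := by
    simpa only [ae_all_iff] using ae_ne
  filter_upwards [ae_all_ne] with h hne i j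
  exact not_imp_not.1 (hne i j)

lemma measurePreserving_comp_perm (μ : Measure α) [SigmaFinite μ] (σ : Equiv.Perm ι) :
    MeasurePreserving (fun h : ι → α => h ∘ σ) (Measure.pi fun _ => μ) (Measure.pi fun _ => μ) :=
  measurePreserving_arrowCongr' (fun _ : ι => μ) (fun _ : ι => μ) σ.symm (MeasurableEquiv.refl α)
    fun _ => MeasurePreserving.id μ

variable [TopologicalSpace α] [SecondCountableTopology α] [OpensMeasurableSpace α] (μ : Measure α)

lemma measureReal_minEvent_eq [PartialOrder α] [OrderClosedTopology α] [SigmaFinite μ]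
    {U : Finset ι} {j k : ι} (hj : j ∈ U) (hk : k ∈ U) :
    (Measure.pi fun _ => μ).real (minEvent U j) = (Measure.pi fun _ => μ).real (minEvent U k) := by
  classical
  rw [← preimage_comp_swap_minEvent hj hk]
  exact (measurePreserving_comp_perm μ (Equiv.swap j k)).measureReal_preimage
    (measurableSet_minEvent U k).nullMeasurableSet

variable [LinearOrder α] [OrderClosedTopology α] [IsProbabilityMeasure μ] [NullSingletonClass μ]

lemma sum_measureReal_minEvent {U : Finset ι} (hU : U.Nonempty) :
    ∑ j ∈ U, (Measure.pi fun _ => μ).real (minEvent U j) = 1 := by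
  have hdisj : (U : Set ι).Pairwise
      (Function.onFun (AEDisjoint (Measure.pi fun _ => μ)) (minEvent U)) := by
    intro j hj k hk hjk
    refine measure_eq_zero_iff_ae_notMem.2 ?_
    filter_upwards [ae_injective_pi fun _ : ι => μ] with h hinj hmin
    exact hjk (eq_of_isMinOn_of_injOn hinj.injOn hj hk hmin.1 hmin.2)
  have hcover : (⋃ j ∈ U, minEvent U j : Set (ι → α)) = Set.univ :=
    Set.eq_univ_of_forall fun h => by
      obtain ⟨j, hj, hmin⟩ := U.exists_min_image h hU
      exact Set.mem_biUnion hj (isMinOn_iff.2 hmin)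
  rw [← measureReal_biUnion_finset₀ hdisj
    fun j _ => (measurableSet_minEvent U j).nullMeasurableSet, hcover, probReal_univ]

lemma measureReal_minEvent {U : Finset ι} {j : ι} (hj : j ∈ U) :
    (Measure.pi fun _ => μ).real (minEvent U j) = (U.card : ℝ)⁻¹ := by
  refine eq_inv_of_mul_eq_one_right ?_
  calc (U.card : ℝ) * (Measure.pi fun _ => μ).real (minEvent U j)
      = ∑ k ∈ U, (Measure.pi fun _ => μ).real (minEvent U k) := by
        rw [Finset.sum_congr rfl fun k hk => measureReal_minEvent_eq μ hk hj, Finset.sum_const,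
          nsmul_eq_mul]
    _ = 1 := sum_measureReal_minEvent μ ⟨j, hj⟩

end ProductMeasure

lemma sum_sq_mul_sq_le {ι R : Type*} [CommRing R] [LinearOrder R] [IsStrictOrderedRing R]
    {x y : ι → R} {s : Finset ι} {c : R} (hx : ∀ i ∈ s, |x i| ≤ c) (hy : ∀ i ∈ s, |y i| ≤ c) :
    ∑ i ∈ s, x i ^ 2 * y i ^ 2 ≤ c ^ 4 * (s.card : R) := by
  have term_le (i : ι) (hi : i ∈ s) : x i ^ 2 * y i ^ 2 ≤ c ^ 4 :=
    calc x i ^ 2 * y i ^ 2 = |x i| ^ 2 * |y i| ^ 2 := by simp only [sq_abs]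
      _ ≤ c ^ 2 * c ^ 2 := by gcongr <;> [exact hx i hi; exact hy i hi]
      _ = c ^ 4 := by ring
  calc ∑ i ∈ s, x i ^ 2 * y i ^ 2 ≤ s.card • c ^ 4 := s.sum_le_card_nsmul _ _ term_le
    _ = c ^ 4 * (s.card : R) := by rw [nsmul_eq_mul, mul_comm]

section MinHash

variable {n : ℕ} (a b : Fin n → ℝ) {A B : Finset (Fin n)} (hA : A.Nonempty) (hB : B.Nonempty)

lemma Zuw_sq (h : Fin n → ℝ) : Zuw a b A B hA hB h ^ 2 = Zuw (a ^ 2) (b ^ 2) A B hA hB h := by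
  simp only [Zuw, mul_pow, ite_pow, one_pow, zero_pow two_ne_zero, Pi.pow_apply]

lemma Zuw_eq_sum_indicator {h : Fin n → ℝ} (hinj : Function.Injective h) :
    Zuw a b A B hA hB h =
      ∑ j ∈ A ∩ B, (minEvent (A ∪ B) j).indicator (fun _ => a j * b j) h := by
  have mem_minEvent_iff {j : Fin n} (hj : j ∈ A ∩ B) :
      h ∈ minEvent (A ∪ B) j ↔ j = argminOn A hA h ∧ j = argminOn B hB h := by
    rw [minEvent, Set.mem_ofPred_eq, Finset.coe_union, isMinOn_union,
      isMinOn_iff_eq_argminOn hA hinj.injOn (Finset.mem_of_mem_inter_left hj),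
      isMinOn_iff_eq_argminOn hB hinj.injOn (Finset.mem_of_mem_inter_right hj)]
  by_cases heq : argminOn A hA h = argminOn B hB h
  · have hmem : argminOn A hA h ∈ A ∩ B :=
      Finset.mem_inter.2 ⟨argminOn_mem A hA h, heq ▸ argminOn_mem B hB h⟩
    rw [Finset.sum_eq_single_of_mem _ hmem fun j hj hne =>
        Set.indicator_of_notMem (fun hmin => hne ((mem_minEvent_iff hj).1 hmin).1) _,
      Set.indicator_of_mem ((mem_minEvent_iff hmem).2 ⟨rfl, heq⟩), Zuw, ← heq, if_pos rfl, one_mul]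
  · rw [Finset.sum_eq_zero fun j hj => Set.indicator_of_notMem (fun hmin =>
        heq (((mem_minEvent_iff hj).1 hmin).1.symm.trans ((mem_minEvent_iff hj).1 hmin).2)) _,
      Zuw, if_neg (hinj.ne heq), zero_mul, zero_mul]

variable (μ : Measure ℝ) [IsProbabilityMeasure μ] [NullSingletonClass μ]

lemma Zuw_ae_eq_sum_indicator : Zuw a b A B hA hB =ᵐ[Measure.pi fun _ => μ]
    fun h => ∑ j ∈ A ∩ B, (minEvent (A ∪ B) j).indicator (fun _ => a j * b j) h := by
  filter_upwards [ae_injective_pi fun _ : Fin n => μ] with h hinj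
  exact Zuw_eq_sum_indicator a b hA hB hinj

lemma aestronglyMeasurable_Zuw :
    AEStronglyMeasurable (Zuw a b A B hA hB) (Measure.pi fun _ => μ) :=
  ⟨_, (Finset.measurable_fun_sum _ fun j _ =>
    measurable_const.indicator (measurableSet_minEvent _ j)).stronglyMeasurable,
    Zuw_ae_eq_sum_indicator a b hA hB μ⟩

lemma integral_Zuw : ∫ h, Zuw a b A B hA hB h ∂(Measure.pi fun _ => μ) =
    (∑ j ∈ A ∩ B, a j * b j) / ((A ∪ B).card : ℝ) := by
  rw [integral_congr_ae (Zuw_ae_eq_sum_indicator a b hA hB μ), integral_finsetSum _ fun j _ =>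
    (integrable_const _).indicator (measurableSet_minEvent _ j), Finset.sum_div]
  refine Finset.sum_congr rfl fun j hj => ?_
  have hj_union : j ∈ A ∪ B := Finset.mem_union_left B (Finset.mem_of_mem_inter_left hj)
  rw [integral_indicator_const _ (measurableSet_minEvent _ j), measureReal_minEvent μ hj_union,
    smul_eq_mul, inv_mul_eq_div]

lemma integral_Zuw_sq : ∫ h, Zuw a b A B hA hB h ^ 2 ∂(Measure.pi fun _ => μ) =
    (∑ j ∈ A ∩ B, a j ^ 2 * b j ^ 2) / ((A ∪ B).card : ℝ) := by
  simp only [Zuw_sq, integral_Zuw, Pi.pow_apply]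

theorem minhash_product_second_moment_general {c : ℝ} (ha : ∀ j ∈ A ∩ B, |a j| ≤ c)
    (hb : ∀ j ∈ A ∩ B, |b j| ≤ c) :
    (∫ h, Zuw a b A B hA hB h ^ 2 ∂(Measure.pi fun _ => μ) =
        (∑ j ∈ A ∩ B, a j ^ 2 * b j ^ 2) / ((A ∪ B).card : ℝ)) ∧
      ProbabilityTheory.variance (Zuw a b A B hA hB) (Measure.pi fun _ => μ) ≤
        c ^ 4 * ((A ∩ B).card : ℝ) / ((A ∪ B).card : ℝ) := by
  refine ⟨integral_Zuw_sq a b hA hB μ, ?_⟩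
  calc ProbabilityTheory.variance (Zuw a b A B hA hB) (Measure.pi fun _ => μ)
      ≤ ∫ h, Zuw a b A B hA hB h ^ 2 ∂(Measure.pi fun _ => μ) :=
        ProbabilityTheory.variance_le_expectation_sq (aestronglyMeasurable_Zuw a b hA hB μ)
    _ = (∑ j ∈ A ∩ B, a j ^ 2 * b j ^ 2) / ((A ∪ B).card : ℝ) := integral_Zuw_sq a b hA hB μ
    _ ≤ c ^ 4 * ((A ∩ B).card : ℝ) / ((A ∪ B).card : ℝ) := by
        gcongr
        exact sum_sq_mul_sq_le ha hb

end MinHash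

/-- For vectors `a, b ∈ ℝⁿ` with nonempty supports `A`, `B`, entries bounded in absolute
value by `c > 0`, and an independent uniform hash family `h` on `{1,...,n}`, the random
variable `Z = 1[h(j_A) = h(j_B)] ⬝ a[j_A] ⬝ b[j_B]` satisfies
`E[Z²] = (∑_{j ∈ A ∩ B} a[j]² b[j]²) / |A ∪ B|` and consequently
`Var[Z] ≤ c⁴ |A ∩ B| / |A ∪ B|`. -/
theorem minhash_product_second_moment {n : ℕ} (a b : Fin n → ℝ) (c : ℝ) (hc : 0 < c)
    (ha : ∀ i, |a i| ≤ c) (hb : ∀ i, |b i| ≤ c)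
    (hA : (supp a).Nonempty) (hB : (supp b).Nonempty) :
    (∫ h, (Zuw a b (supp a) (supp b) hA hB h) ^ 2 ∂(uniformHash (Fin n))
        = (∑ j ∈ supp a ∩ supp b, (a j) ^ 2 * (b j) ^ 2) / ((supp a ∪ supp b).card : ℝ))
    ∧ ProbabilityTheory.variance (Zuw a b (supp a) (supp b) hA hB) (uniformHash (Fin n))
        ≤ c ^ 4 * ((supp a ∩ supp b).card : ℝ) / ((supp a ∪ supp b).card : ℝ) := by
  have : IsProbabilityMeasure ((volume : Measure ℝ).restrict (Set.Icc 0 1)) := ⟨by simp⟩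
  exact minhash_product_second_moment_general a b hA hB _ (fun j _ => ha j) (fun j _ => hb j)
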